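/- Fix a Littlewood–Paley partition (χ̃, χ). Let α ∈ ℝ and p, q, p′, q′ ∈ [1,∞] with 1/p + 1/p′ = 1 and 1/q + 1/q′ = 1. There exists a constant C > 0 such that, uniformly over all integers N ≥ 1 (ε = 1/N) and all f, g: Λ_ε → ℝ, one has ⟨f,g⟩_{Λ_ε} ≤ C ‖f‖_{B^α_{p,q}(Λ_ε)} ‖g‖_{B^{−α}_{p′,q′}(Λ_ε)}. -/

import Mathlib

open scoped BigOperators ENNReal
open MeasureTheory

noncomputable section

namespace IsingKac

/-- The periodic lattice `Λ_N = {1-N, …, N}²`, realised as `(ℤ/2Nℤ)²`. -/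
abbrev Lat (N : ℕ) : Type := ZMod (2*N) × ZMod (2*N)

instance latNeZero (N : ℕ) [NeZero N] : NeZero (2*N) := ⟨by have := NeZero.ne N; omega⟩

/-- The representative of `v ∈ ℤ/2Nℤ` lying in `{1-N, …, N}`. -/
def latRep (N : ℕ) (v : ZMod (2*N)) : ℤ :=
  if (v.val : ℤ) ≤ (N : ℤ) then (v.val : ℤ) else (v.val : ℤ) - 2*N

def latRep2 (N : ℕ) (z : Lat N) : ℤ × ℤ := (latRep N z.1, latRep N z.2)

/-- The character `e_w(x) = exp(iπ w·x)`. -/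
def eW (w : ℤ × ℤ) (x : ℝ × ℝ) : ℂ :=
  Complex.exp ((Real.pi : ℂ) * Complex.I * ((w.1 : ℂ) * (x.1 : ℂ) + (w.2 : ℂ) * (x.2 : ℂ)))

/-- The point `ε z ∈ Λ_ε ⊂ 𝕋²` corresponding to `z ∈ Λ_N` (with `ε = 1/N`). -/
def latPt (N : ℕ) (z : Lat N) : ℝ × ℝ :=
  ((latRep N z.1 : ℝ) / N, (latRep N z.2 : ℝ) / N)

/-- Discrete Fourier coefficient `f̂(w) = Σ_{x ∈ Λ_ε} ε² f(x) e^{-iπ w·x}`. -/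
def dFT (N : ℕ) [NeZero N] (f : Lat N → ℂ) (w : ℤ × ℤ) : ℂ :=
  ∑ z : Lat N, ((N : ℂ)^2)⁻¹ * f z * (starRingEnd ℂ) (eW w (latPt N z))

/-- The extension operator `(Ex f)(x) = (1/4) Σ_{w ∈ Λ_N} f̂(w) e^{iπ w·x}` for `x ∈ 𝕋²`. -/
def Ex (N : ℕ) [NeZero N] (f : Lat N → ℂ) (x : ℝ × ℝ) : ℂ :=
  (1/4 : ℂ) * ∑ z : Lat N, dFT N f (latRep2 N z) * eW (latRep2 N z) x

/-- Discrete `L^p` norm on `Λ_ε`, `p ∈ [1,∞]`. -/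
def dLp (N : ℕ) [NeZero N] (p : ℝ≥0∞) {E : Type*} [NormedAddCommGroup E]
    (f : Lat N → E) : ℝ :=
  if p = ∞ then ⨆ z : Lat N, ‖f z‖
  else (∑ z : Lat N, ((N : ℝ)^2)⁻¹ * ‖f z‖ ^ p.toReal) ^ (1/p.toReal)

/-- Fundamental domain of the torus `𝕋² = [-1,1]²`. -/
def box : Set (ℝ × ℝ) := Set.Icc (-1 : ℝ) 1 ×ˢ Set.Icc (-1 : ℝ) 1

/-- `L^p(𝕋²)` norm, `p ∈ [1,∞]`. -/
def cLp (p : ℝ≥0∞) {E : Type*} [NormedAddCommGroup E] (g : ℝ × ℝ → E) : ℝ≥0∞ :=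
  eLpNorm g p (volume.restrict box)

/-- Euclidean norm on `ℝ²`. -/
def enorm2 (r : ℝ × ℝ) : ℝ := Real.sqrt (r.1^2 + r.2^2)

/-- A Littlewood–Paley partition of unity `(χ̃, χ)` on `ℝ²`. -/
structure LPpartition : Type where
  chit : ℝ × ℝ → ℝ
  chi : ℝ × ℝ → ℝ
  cont_t : Continuous chit
  cont : Continuous chi
  mem_t : ∀ r, chit r ∈ Set.Icc (0:ℝ) 1
  mem : ∀ r, chi r ∈ Set.Icc (0:ℝ) 1
  supp_t : ∀ r : ℝ × ℝ, 4/3 < enorm2 r → chit r = 0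
  supp : ∀ r : ℝ × ℝ, enorm2 r < 3/4 ∨ 8/3 < enorm2 r → chi r = 0
  partition : ∀ r : ℝ × ℝ, chit r + ∑' k : ℕ, chi ((2:ℝ)^(-(k:ℤ)) • r) = 1

/-- `χ_k`, for `k ≥ -1`. -/
def LPchi (P : LPpartition) (k : ℤ) : ℝ × ℝ → ℝ :=
  if k = -1 then P.chit else fun r => P.chi ((2:ℝ)^(-k) • r)

/-- The Littlewood–Paley block `δ_k (Ex f)` of (the extension of) a lattice function. -/
def dBlock (N : ℕ) [NeZero N] (P : LPpartition) (k : ℤ) (f : Lat N → ℂ) (x : ℝ × ℝ) : ℂ :=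
  (1/4 : ℂ) * ∑ z : Lat N,
    ((LPchi P k ((latRep N z.1 : ℝ), (latRep N z.2 : ℝ)) : ℝ) : ℂ) *
      dFT N f (latRep2 N z) * eW (latRep2 N z) x

/-- Discrete Besov norm `‖f‖_{B^ν_{p,q}(Λ_ε)}`. -/
def dBesov (N : ℕ) [NeZero N] (P : LPpartition) (ν : ℝ) (p q : ℝ≥0∞) (f : Lat N → ℂ) : ℝ :=
  if q = ∞ then
    ⨆ k : ℕ, (2:ℝ)^(ν * ((k:ℝ) - 1)) * dLp N p (fun z => dBlock N P ((k:ℤ)-1) f (latPt N z))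
  else
    (∑' k : ℕ, ((2:ℝ)^(ν * ((k:ℝ) - 1)) *
      dLp N p (fun z => dBlock N P ((k:ℤ)-1) f (latPt N z))) ^ q.toReal) ^ (1/q.toReal)

/-- The `C^{-ν}` (Besov–Hölder) norm of the extension `Ex f`:
`sup_{k ≥ -1} 2^{-νk} ‖δ_k (Ex f)‖_{L^∞(𝕋²)}`. -/
def holderNeg (N : ℕ) [NeZero N] (P : LPpartition) (ν : ℝ) (f : Lat N → ℂ) : ℝ :=
  ⨆ k : ℕ, (2:ℝ)^(-ν * ((k:ℝ) - 1)) * ⨆ x : ℝ × ℝ, ‖dBlock N P ((k:ℤ)-1) f x‖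

/-- Spin values. -/
def spin (s : Bool) : ℝ := if s then 1 else -1

/-- Hamiltonian `H(σ) = (β/2) Σ_{x,y} k(x-y) σ_x σ_y + b Σ_x σ_x`. -/
def hamil (N : ℕ) [NeZero N] (kk : Lat N → ℝ) (β b : ℝ) (σ : Lat N → ℝ) : ℝ :=
  β/2 * ∑ x : Lat N, ∑ y : Lat N, kk (x - y) * σ x * σ y + b * ∑ x : Lat N, σ x

/-- Gibbs expectation `E^γ_{β,b}[F]`. -/
def gibbsE (N : ℕ) [NeZero N] (kk : Lat N → ℝ) (β b : ℝ) (F : (Lat N → ℝ) → ℝ) : ℝ :=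
  (∑ s : Lat N → Bool, Real.exp (hamil N kk β b (fun x => spin (s x))) * F (fun x => spin (s x))) /
  (∑ s : Lat N → Bool, Real.exp (hamil N kk β b (fun x => spin (s x))))

/-- The profile `𝔎 : ℝ² → [0,1]`, twice differentiable, radial, supported in `B(0,3)`,
not identically zero. -/
structure KacProfile : Type where
  f : ℝ × ℝ → ℝ
  smooth : ContDiff ℝ 2 f
  mem : ∀ x, f x ∈ Set.Icc (0:ℝ) 1
  radial : ∀ x y : ℝ × ℝ, enorm2 x = enorm2 y → f x = f y
  supp : ∀ x : ℝ × ℝ, 3 < enorm2 x → f x = 0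
  nontriv : ∃ x, f x ≠ 0

/-- The Kac kernel `k_γ(z) = c γ² 𝔎(γ·z)` (shortest periodic representative), `k_γ(0)=0`. -/
def kGamma (𝔎 : KacProfile) (N : ℕ) (c γ : ℝ) (z : Lat N) : ℝ :=
  if z = 0 then 0 else c * γ^2 * 𝔎.f (γ * (latRep N z.1 : ℝ), γ * (latRep N z.2 : ℝ))

/-- `γ = N^{-1/2}`, so that `γ² = ε = 1/N`. -/
def gam (N : ℕ) : ℝ := Real.sqrt ((N : ℝ)⁻¹)

/-- Fourier transform `K̂_γ(ω) = Σ_z k_γ(z) e^{-iπ ω·(εz)}` of the macroscopic kernel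
(real, since the kernel is even). -/
def kHat (N : ℕ) [NeZero N] (kk : Lat N → ℝ) (ω : ℤ × ℤ) : ℝ :=
  ∑ z : Lat N, kk z *
    Real.cos (Real.pi * ((ω.1 : ℝ) * (latRep N z.1 : ℝ) / N + (ω.2 : ℝ) * (latRep N z.2 : ℝ) / N))

/-- The renormalisation constant
`𝔠_γ = (1/4) Σ_{ω ∈ Λ_N \ {0}} |K̂_γ(ω)|² / (γ^{-2} (1-K̂_γ(ω)))`. -/
def cGamma (N : ℕ) [NeZero N] (kk : Lat N → ℝ) (γ : ℝ) : ℝ :=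
  (1/4) * ∑ z : Lat N, if z = (0 : Lat N) then 0 else
    (kHat N kk (latRep2 N z))^2 / ((γ^2)⁻¹ * (1 - kHat N kk (latRep2 N z)))

/-- Critical inverse temperature `β = 1 + γ²(𝔠_γ + A)`. -/
def betaCrit (𝔎 : KacProfile) (N : ℕ) [NeZero N] (c A : ℝ) : ℝ :=
  1 + (gam N)^2 * (cGamma N (kGamma 𝔎 N c (gam N)) (gam N) + A)

/-- The fluctuation field `X_γ(x) = γ^{-1} Σ_z k_γ(ε^{-1}x - z) σ_z`, as a function on `Λ_N`. -/
def fluct (N : ℕ) [NeZero N] (kk : Lat N → ℝ) (γ : ℝ) (σ : Lat N → ℝ) (z : Lat N) : ℝ :=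
  γ⁻¹ * ∑ y : Lat N, kk (z - y) * σ y

/-- The rescaled step field `γ^{-1} σ_{⌊ε^{-1}x⌋}` on the torus (without the `γ^{-1}`). -/
def stepField (N : ℕ) (σ : Lat N → ℝ) (x : ℝ × ℝ) : ℝ :=
  σ (((⌊(N : ℝ) * x.1⌋ : ℤ) : ZMod (2*N)), ((⌊(N : ℝ) * x.2⌋ : ℤ) : ZMod (2*N)))

/-- Fourier coefficient on the torus: `ĝ(ω) = ∫_{𝕋²} g(x) e^{-iπω·x} dx`. -/
def cFT (g : ℝ × ℝ → ℂ) (ω : ℤ × ℤ) : ℂ :=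
  ∫ x in box, g x * (starRingEnd ℂ) (eW ω x)


/-! ### Additional definitions -/

/-- Nearest-neighbour Dirichlet sum `Σ_{x,y ∈ Λ_ε, |x-y|=ε} ε² (f(y)-f(x))²`. -/
def nnSum (N : ℕ) [NeZero N] (f : Lat N → ℝ) : ℝ :=
  ∑ x : Lat N, ((N : ℝ)^2)⁻¹ *
    ((f (x + (1, 0)) - f x)^2 + (f (x + (0, 1)) - f x)^2 +
     (f (x - (1, 0)) - f x)^2 + (f (x - (0, 1)) - f x)^2)

/-- The `d`-dimensional periodic lattice `Λ_N^d`. -/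
abbrev LatD (d N : ℕ) : Type := Fin d → ZMod (2*N)

/-- Discrete `L^p` norm on `Λ_ε^d`, `p ∈ [1,∞]`. -/
def dLpD (d N : ℕ) [NeZero N] (p : ℝ≥0∞) (f : LatD d N → ℂ) : ℝ :=
  if p = ∞ then ⨆ z : LatD d N, ‖f z‖
  else (∑ z : LatD d N, ((N : ℝ)^d)⁻¹ * ‖f z‖ ^ p.toReal) ^ (1/p.toReal)

/-- `Σ_{w ∈ Λ_N^d} χ(λ w) e_w`, evaluated at the lattice point `ε z ∈ Λ_ε^d`. -/
def gLam (d N : ℕ) [NeZero N] (χ : (Fin d → ℝ) → ℝ) (lam : ℝ) (z : LatD d N) : ℂ :=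
  ∑ w : LatD d N, ((χ (fun i => lam * (latRep N (w i) : ℝ)) : ℝ) : ℂ) *
    Complex.exp ((Real.pi : ℂ) * Complex.I *
      ((∑ i : Fin d, (latRep N (w i) : ℝ) * ((latRep N (z i) : ℝ) / N) : ℝ) : ℂ))

/-- Second partial derivative of `φ` in directions `v, w`. -/
def pd2 (φ : ℝ × ℝ → ℝ) (v w : ℝ × ℝ) : ℝ × ℝ → ℝ :=
  fun x => fderiv ℝ (fun y => fderiv ℝ φ y v) x w

/-- `max_{i,j ∈ {1,2}} ‖∂_i ∂_j φ‖_{L^∞}`. -/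
def secondDerivBound (φ : ℝ × ℝ → ℝ) : ℝ :=
  max (max (⨆ x : ℝ × ℝ, |pd2 φ (1,0) (1,0) x|) (⨆ x : ℝ × ℝ, |pd2 φ (1,0) (0,1) x|))
      (max (⨆ x : ℝ × ℝ, |pd2 φ (0,1) (1,0) x|) (⨆ x : ℝ × ℝ, |pd2 φ (0,1) (0,1) x|))

/-- The Littlewood–Paley block `δ_k g` of a function on the torus. -/
def cBlock (P : LPpartition) (k : ℤ) (g : ℝ × ℝ → ℂ) (x : ℝ × ℝ) : ℂ :=
  (1/4 : ℂ) * ∑' ω : ℤ × ℤ, ((LPchi P k ((ω.1 : ℝ), (ω.2 : ℝ)) : ℝ) : ℂ) * cFT g ω * eW ω x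

/-- Besov norm `‖g‖_{B^ν_{1,1}(𝕋²)} = Σ_{k ≥ -1} 2^{νk} ‖δ_k g‖_{L¹(𝕋²)}`. -/
def cBesov11 (P : LPpartition) (ν : ℝ) (g : ℝ × ℝ → ℂ) : ℝ :=
  ∑' k : ℕ, (2:ℝ) ^ (ν * ((k:ℝ) - 1)) * ∫ x in box, ‖cBlock P ((k:ℤ)-1) g x‖

open scoped NNReal

theorem holder_gen {ι : Type*} (s : Finset ι) (c : ℝ) (hc : 0 ≤ c) (a b : ι → ℝ)
    (ha : ∀ i, 0 ≤ a i) (hb : ∀ i, 0 ≤ b i) (p p' : ℝ≥0∞)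
    (hpc : 1/p + 1/p' = 1) (A B : ℝ) (hA0 : 0 ≤ A) (hB0 : 0 ≤ B)
    (hA1 : p = ∞ → ∀ i ∈ s, a i ≤ A)
    (hA2 : p ≠ ∞ → (∑ i ∈ s, c * a i ^ p.toReal) ^ (1/p.toReal) ≤ A)
    (hB1 : p' = ∞ → ∀ i ∈ s, b i ≤ B)
    (hB2 : p' ≠ ∞ → (∑ i ∈ s, c * b i ^ p'.toReal) ^ (1/p'.toReal) ≤ B) :
    ∑ i ∈ s, c * a i * b i ≤ A * B := by
  by_cases hp : p = ∞
  · have hp' : p' = 1 := by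
      subst hp
      simpa using hpc
    subst hp'
    have h2 := hB2 (by simp)
    simp at h2
    calc ∑ i ∈ s, c * a i * b i ≤ ∑ i ∈ s, A * (c * b i) := by
          refine Finset.sum_le_sum fun i hi => ?_
          have := mul_le_mul_of_nonneg_right (hA1 hp i hi) (mul_nonneg hc (hb i))
          linarith
      _ = A * ∑ i ∈ s, c * b i := by rw [Finset.mul_sum]
      _ ≤ A * B := mul_le_mul_of_nonneg_left h2 hA0
  by_cases hp' : p' = ∞
  · have hp1 : p = 1 := by
      subst hp'
      simpa using hpc
    subst hp1
    have h2 := hA2 (by simp)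
    simp at h2
    calc ∑ i ∈ s, c * a i * b i ≤ ∑ i ∈ s, (c * a i) * B := by
          refine Finset.sum_le_sum fun i hi => ?_
          exact mul_le_mul_of_nonneg_left (hB1 hp' i hi) (mul_nonneg hc (ha i))
      _ = (∑ i ∈ s, c * a i) * B := by rw [Finset.sum_mul]
      _ ≤ A * B := mul_le_mul_of_nonneg_right h2 hB0
  have : ENNReal.HolderConjugate p p' := ⟨by simpa using hpc⟩
  have hconj := ENNReal.HolderConjugate.toReal_of_ne_top hp hp'
  have h := Real.inner_le_Lp_mul_Lq_of_nonneg s (f := fun i => c ^ (1/p.toReal) * a i)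
    (g := fun i => c ^ (1/p'.toReal) * b i) hconj
    (fun i _ => mul_nonneg (Real.rpow_nonneg hc _) (ha i))
    (fun i _ => mul_nonneg (Real.rpow_nonneg hc _) (hb i))
  have e1 : ∀ i, (c ^ (1/p.toReal) * a i) ^ p.toReal = c * a i ^ p.toReal := by
    intro i
    rw [Real.mul_rpow (Real.rpow_nonneg hc _) (ha i), ← Real.rpow_mul hc,
      one_div, inv_mul_cancel₀ hconj.pos.ne', Real.rpow_one]
  have e2 : ∀ i, (c ^ (1/p'.toReal) * b i) ^ p'.toReal = c * b i ^ p'.toReal := by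
    intro i
    rw [Real.mul_rpow (Real.rpow_nonneg hc _) (hb i), ← Real.rpow_mul hc,
      one_div, inv_mul_cancel₀ hconj.symm.pos.ne', Real.rpow_one]
  have e3 : c ^ (1/p.toReal) * c ^ (1/p'.toReal) = c := by
    rw [← Real.rpow_add' hc]
    · have := hconj.inv_add_inv_eq_one
      rw [one_div, one_div, this, Real.rpow_one]
    · have := hconj.inv_add_inv_eq_one
      rw [one_div, one_div, this]; norm_num
  simp only [e1, e2] at h
  calc ∑ i ∈ s, c * a i * b i
      = ∑ i ∈ s, c ^ (1/p.toReal) * a i * (c ^ (1/p'.toReal) * b i) := by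
        refine Finset.sum_congr rfl fun i _ => ?_
        conv_lhs => rw [← e3]
        ring
    _ ≤ _ := h
    _ ≤ A * B := mul_le_mul (hA2 hp) (hB2 hp') (Real.rpow_nonneg
        (Finset.sum_nonneg fun i _ => mul_nonneg hc (Real.rpow_nonneg (hb i) _)) _) hA0

theorem dLp_nonneg (N : ℕ) [NeZero N] (p : ℝ≥0∞) (f : Lat N → ℂ) : 0 ≤ dLp N p f := by
  unfold dLp
  split_ifs
  · exact Real.iSup_nonneg fun _ => norm_nonneg _
  · positivity

theorem dLp_holder (N : ℕ) [NeZero N] (p p' : ℝ≥0∞) (hpc : 1/p + 1/p' = 1) (f g : Lat N → ℂ) :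
    ‖∑ z : Lat N, ((N:ℂ)^2)⁻¹ * f z * (starRingEnd ℂ) (g z)‖ ≤ dLp N p f * dLp N p' g := by
  refine (norm_sum_le _ _).trans ?_
  have := holder_gen (Finset.univ : Finset (Lat N)) (((N:ℝ)^2)⁻¹) (by positivity)
    (fun z => ‖f z‖) (fun z => ‖g z‖) (fun _ => norm_nonneg _) (fun _ => norm_nonneg _)
    p p' hpc (dLp N p f) (dLp N p' g) (dLp_nonneg _ _ _) (dLp_nonneg _ _ _)
    (fun h i _ => by
      rw [dLp, if_pos h]
      exact le_ciSup (f := fun z => ‖f z‖) (Set.finite_range _).bddAbove i)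
    (fun h => by rw [dLp, if_neg h])
    (fun h i _ => by
      rw [dLp, if_pos h]
      exact le_ciSup (f := fun z => ‖g z‖) (Set.finite_range _).bddAbove i)
    (fun h => by rw [dLp, if_neg h])
  refine le_trans (le_of_eq ?_) this
  refine Finset.sum_congr rfl fun z _ => ?_
  simp

/-- The `ℓ^q` norm of a sequence. -/
def lq (q : ℝ≥0∞) (a : ℕ → ℝ) : ℝ :=
  if q = ∞ then ⨆ k : ℕ, a k else (∑' k : ℕ, a k ^ q.toReal) ^ (1/q.toReal)

theorem lq_nonneg (q : ℝ≥0∞) (a : ℕ → ℝ) (ha : ∀ i, 0 ≤ a i) : 0 ≤ lq q a := by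
  unfold lq
  split_ifs
  · exact Real.iSup_nonneg ha
  · exact Real.rpow_nonneg (tsum_nonneg fun _ => Real.rpow_nonneg (ha _) _) _

theorem lq_holder (q q' : ℝ≥0∞) (hq : 1 ≤ q) (hq' : 1 ≤ q') (hqc : 1/q + 1/q' = 1) (a b : ℕ → ℝ)
    (ha : ∀ i, 0 ≤ a i) (hb : ∀ i, 0 ≤ b i) (K : ℕ) (haK : ∀ n, K ≤ n → a n = 0)
    (hbK : ∀ n, K ≤ n → b n = 0) (s : Finset ℕ) (σ τ : ℕ → ℕ) (hσ : σ.Injective)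
    (hτ : τ.Injective) :
    ∑ i ∈ s, a (σ i) * b (τ i) ≤ lq q a * lq q' b := by
  have key1 : ∀ (a : ℕ → ℝ) (q : ℝ≥0∞) (σ : ℕ → ℕ), (∀ n, K ≤ n → a n = 0) →
      q = ∞ → ∀ i ∈ s, a (σ i) ≤ lq q a := by
    intro a q σ haK h i _
    rw [lq, if_pos h]
    refine le_ciSup (f := a) (Set.Finite.bddAbove ?_) (σ i)
    refine ((Set.finite_Iio K).image a |>.union (Set.finite_singleton 0)).subset ?_
    rintro _ ⟨n, rfl⟩
    by_cases hn : n < K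
    · exact Or.inl ⟨n, hn, rfl⟩
    · exact Or.inr (haK n (not_lt.1 hn))
  have key2 : ∀ (a : ℕ → ℝ) (q : ℝ≥0∞) (σ : ℕ → ℕ), 1 ≤ q → (∀ i, 0 ≤ a i) → σ.Injective →
      (∀ n, K ≤ n → a n = 0) →
      q ≠ ∞ → (∑ i ∈ s, 1 * a (σ i) ^ q.toReal) ^ (1/q.toReal) ≤ lq q a := by
    intro a q σ hq ha hσ haK h
    rw [lq, if_neg h]
    have hq0 : q.toReal ≠ 0 := by
      have : 0 < q.toReal := ENNReal.toReal_pos (by rintro rfl; simp at hq) h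
      exact this.ne'
    refine Real.rpow_le_rpow (Finset.sum_nonneg fun i _ => by
      rw [one_mul]; exact Real.rpow_nonneg (ha _) _) ?_ (by positivity)
    simp only [one_mul]
    rw [← Finset.sum_image (f := fun k => a k ^ q.toReal) (fun x _ y _ h => hσ h)]
    refine Summable.sum_le_tsum _ (fun i _ => Real.rpow_nonneg (ha _) _) ?_
    refine summable_of_ne_finset_zero (s := Finset.range K) fun n hn => ?_
    rw [haK n (by simpa using hn), Real.zero_rpow hq0]
  have := holder_gen s 1 zero_le_one (fun i => a (σ i)) (fun i => b (τ i)) (fun _ => ha _)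
    (fun _ => hb _) q q' hqc _ _ (lq_nonneg q a ha) (lq_nonneg q' b hb)
    (key1 a q σ haK) (key2 a q σ hq ha hσ haK) (key1 b q' τ hbK) (key2 b q' τ hq' hb hτ hbK)
  simpa using this

theorem near_diag (T : ℕ → ℕ → ℝ) (hT : ∀ n m, 0 ≤ T n m)
    (h1 : ∀ n m, n + 2 ≤ m → T n m = 0) (h2 : ∀ n m, m + 2 ≤ n → T n m = 0) (K : ℕ) :
    ∑ n ∈ Finset.range K, ∑ m ∈ Finset.range K, T n m ≤
      ∑ n ∈ Finset.range K, T n n + ∑ n ∈ Finset.range K, T n (n+1) +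
        ∑ n ∈ Finset.range K, T (n+1) n := by
  have e : ∀ n m, T n m = (if m = n then T n n else 0) + (if m = n + 1 then T n (n+1) else 0) +
      (if n = m + 1 then T (m+1) m else 0) := by
    intro n m
    rcases lt_trichotomy n m with h | h | h
    · by_cases hh : m = n + 1
      · subst hh; simp; omega
      · rw [h1 n m (by omega)]; simp [hh, h.ne', show n ≠ m + 1 by omega]
    · subst h; simp
    · by_cases hh : n = m + 1
      · subst hh; simp; omega
      · rw [h2 n m (by omega)]; simp [hh, h.ne, show m ≠ n + 1 by omega]
  calc _ = ∑ n ∈ Finset.range K, ∑ m ∈ Finset.range K, (if m = n then T n n else 0)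
        + ∑ n ∈ Finset.range K, ∑ m ∈ Finset.range K, (if m = n + 1 then T n (n+1) else 0)
        + ∑ m ∈ Finset.range K, ∑ n ∈ Finset.range K, (if n = m + 1 then T (m+1) m else 0) := by
        rw [Finset.sum_comm (f := fun m n => if n = m + 1 then T (m+1) m else 0),
          ← Finset.sum_add_distrib, ← Finset.sum_add_distrib]
        refine Finset.sum_congr rfl fun n _ => ?_
        rw [← Finset.sum_add_distrib, ← Finset.sum_add_distrib]
        exact Finset.sum_congr rfl fun m _ => e n m
    _ ≤ _ := by
        gcongr <;> rw [Finset.sum_ite_eq'] <;> split_ifs <;> first | exact le_rfl | exact hT _ _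

theorem enorm2_smul (t : ℝ) (ht : 0 ≤ t) (r : ℝ × ℝ) : enorm2 (t • r) = t * enorm2 r := by
  unfold enorm2
  have : (t • r).1^2 + (t • r).2^2 = t^2 * (r.1^2 + r.2^2) := by
    simp; ring
  rw [this, Real.sqrt_mul (by positivity), Real.sqrt_sq ht]

theorem LPchi_zero (P : LPpartition) (r : ℝ × ℝ) : LPchi P (((0:ℕ):ℤ) - 1) r = P.chit r := by
  simp [LPchi]

theorem LPchi_succ (P : LPpartition) (n : ℕ) (r : ℝ × ℝ) :
    LPchi P (((n+1:ℕ):ℤ) - 1) r = P.chi ((2:ℝ)^(-(n:ℤ)) • r) := by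
  have h : (((n+1:ℕ):ℤ) - 1) = n := by push_cast; ring
  rw [h, LPchi, if_neg (by omega)]

theorem chi_lower (P : LPpartition) (n : ℕ) (r : ℝ × ℝ)
    (h : enorm2 r < 3/4 * 2^n) : LPchi P (((n+1:ℕ):ℤ) - 1) r = 0 := by
  rw [LPchi_succ]
  refine P.supp _ (Or.inl ?_)
  rw [enorm2_smul _ (by positivity), zpow_neg, zpow_natCast, inv_mul_lt_iff₀ (by positivity)]
  linarith

theorem chi_upper (P : LPpartition) (n : ℕ) (r : ℝ × ℝ)
    (h : 8/3 * 2^n < enorm2 r) : LPchi P (((n+1:ℕ):ℤ) - 1) r = 0 := by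
  rw [LPchi_succ]
  refine P.supp _ (Or.inr ?_)
  rw [enorm2_smul _ (by positivity), zpow_neg, zpow_natCast, lt_inv_mul_iff₀ (by positivity)]
  linarith

theorem chi_disj (P : LPpartition) (n m : ℕ) (h : n + 2 ≤ m) (r : ℝ × ℝ) :
    LPchi P ((n:ℤ) - 1) r * LPchi P ((m:ℤ) - 1) r = 0 := by
  obtain ⟨m, rfl⟩ : ∃ m', m = m' + 1 := ⟨m - 1, by omega⟩
  by_cases hr : enorm2 r < 3/4 * 2^m
  · rw [chi_lower P m r hr, mul_zero]
  push Not at hr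
  cases n with
  | zero =>
    have : (2:ℝ)^1 ≤ 2^m := pow_le_pow_right₀ (by norm_num) (by omega)
    rw [LPchi_zero, P.supp_t r (by linarith), zero_mul]
  | succ n =>
    have : (2:ℝ)^(n+2) ≤ 2^m := pow_le_pow_right₀ (by norm_num) (by omega)
    rw [pow_add] at this
    have h0 : (0:ℝ) < 2^n := by positivity
    rw [chi_upper P n r (by linarith), zero_mul]

theorem exists_K (P : LPpartition) {ι : Type*} [Fintype ι] (r : ι → ℝ × ℝ) :
    ∃ K : ℕ, (∀ i n, K ≤ n → LPchi P ((n:ℤ) - 1) (r i) = 0) ∧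
      ∀ i, ∑ n ∈ Finset.range K, LPchi P ((n:ℤ) - 1) (r i) = 1 := by
  obtain ⟨M, hM⟩ := (Set.finite_range (fun i => enorm2 (r i))).bddAbove
  obtain ⟨K, hK⟩ := pow_unbounded_of_one_lt (4/3 * M) (one_lt_two (α := ℝ))
  have hz : ∀ i n, K + 1 ≤ n → LPchi P ((n:ℤ) - 1) (r i) = 0 := by
    intro i n hn
    obtain ⟨m, rfl⟩ : ∃ m', n = m' + 1 := ⟨n - 1, by omega⟩
    refine chi_lower P m _ ?_
    have h1 : enorm2 (r i) ≤ M := hM ⟨i, rfl⟩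
    have : (2:ℝ)^K ≤ 2^m := pow_le_pow_right₀ (by norm_num) (by omega)
    linarith
  refine ⟨K+1, hz, fun i => ?_⟩
  rw [Finset.sum_range_succ', LPchi_zero, ← P.partition (r i), add_comm,
    tsum_eq_sum (s := Finset.range K)]
  · simp only [LPchi_succ]
  · intro n hn
    rw [← LPchi_succ]
    exact hz i _ (by simpa using hn)

/-- The lattice character. -/
def chE (N : ℕ) [NeZero N] (w z : Lat N) : ℂ :=
  ZMod.stdAddChar (w.1 * z.1) * ZMod.stdAddChar (w.2 * z.2)

theorem latRep_cast (N : ℕ) [NeZero N] (v : ZMod (2*N)) : ((latRep N v : ℤ) : ZMod (2*N)) = v := by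
  have h2 : (2 * (N : ZMod (2*N))) = 0 := by
    have := ZMod.natCast_self (2*N)
    push_cast at this
    exact this
  unfold latRep
  split_ifs
  · simp
  · simp [h2]

theorem eW_eq (N : ℕ) [NeZero N] (w z : Lat N) : eW (latRep2 N w) (latPt N z) = chE N w z := by
  have hN : (N:ℂ) ≠ 0 := by exact_mod_cast NeZero.ne N
  have h : ∀ u v : ZMod (2*N), ZMod.stdAddChar (u * v) =
      Complex.exp (2 * Real.pi * Complex.I * ((latRep N u * latRep N v : ℤ) : ℂ) / ((2*N:ℕ):ℂ)) := by
    intro u v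
    rw [← ZMod.stdAddChar_coe]
    push_cast
    rw [latRep_cast, latRep_cast]
  rw [chE, h, h, ← Complex.exp_add, eW]
  congr 1
  simp only [latRep2, latPt]
  push_cast
  field_simp

theorem chE_comm (N : ℕ) [NeZero N] (w z : Lat N) : chE N w z = chE N z w := by
  simp only [chE, mul_comm]

theorem chE_orth (N : ℕ) [NeZero N] (z z' : Lat N) :
    ∑ w : Lat N, chE N w z * (starRingEnd ℂ) (chE N w z') = if z = z' then 4 * (N:ℂ)^2 else 0 := by
  have h : ∀ w : Lat N, chE N w z * (starRingEnd ℂ) (chE N w z') =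
      ZMod.stdAddChar (w.1 * (z.1 - z'.1)) * ZMod.stdAddChar (w.2 * (z.2 - z'.2)) := by
    intro w
    have hs : ∀ u v : ZMod (2*N), (ZMod.stdAddChar (u - v) : ℂ) =
        ZMod.stdAddChar u * (starRingEnd ℂ) (ZMod.stdAddChar v) := by
      intro u v
      rw [sub_eq_add_neg, AddChar.map_add_eq_mul, AddChar.map_neg_eq_conj]
    rw [mul_sub, mul_sub, hs, hs]
    simp only [chE, map_mul]
    ring
  simp only [h]
  rw [Fintype.sum_prod_type]
  simp only [← Finset.mul_sum]
  rw [← Finset.sum_mul, AddChar.sum_mulShift _ (ZMod.isPrimitive_stdAddChar _),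
    AddChar.sum_mulShift _ (ZMod.isPrimitive_stdAddChar _)]
  simp only [sub_eq_zero, ZMod.card, Prod.ext_iff]
  by_cases h1 : z.1 = z'.1 <;> by_cases h2 : z.2 = z'.2 <;> simp [h1, h2]
  ring

theorem dBlock_eq (N : ℕ) [NeZero N] (P : LPpartition) (k : ℤ) (f : Lat N → ℂ) (z : Lat N) :
    dBlock N P k f (latPt N z) = (1/4 : ℂ) * ∑ w : Lat N,
      ((LPchi P k ((latRep N w.1 : ℝ), (latRep N w.2 : ℝ)) : ℝ) : ℂ) *
      dFT N f (latRep2 N w) * chE N w z := by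
  simp only [dBlock, eW_eq]

theorem inversion (N : ℕ) [NeZero N] (f : Lat N → ℂ) (z : Lat N) :
    (1/4 : ℂ) * ∑ w : Lat N, dFT N f (latRep2 N w) * chE N w z = f z := by
  have hN : (N:ℂ) ≠ 0 := by exact_mod_cast NeZero.ne N
  simp only [dFT, eW_eq, Finset.sum_mul]
  rw [Finset.sum_comm]
  have : ∀ y : Lat N, ∑ w : Lat N, ((N:ℂ)^2)⁻¹ * f y * (starRingEnd ℂ) (chE N w y) * chE N w z =
      if z = y then 4 * f y else 0 := by
    intro y
    have := chE_orth N z y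
    calc _ = ((N:ℂ)^2)⁻¹ * f y * ∑ w : Lat N, chE N w z * (starRingEnd ℂ) (chE N w y) := by
          rw [Finset.mul_sum]; refine Finset.sum_congr rfl fun w _ => by ring
      _ = _ := by
          rw [this]; split_ifs
          · field_simp
          · simp
  simp only [this]
  simp

theorem block_orth (N : ℕ) [NeZero N] (P : LPpartition) (k j : ℤ)
    (hkj : ∀ r, LPchi P k r * LPchi P j r = 0) (f g : Lat N → ℂ) :
    ∑ z : Lat N, ((N:ℂ)^2)⁻¹ * dBlock N P k f (latPt N z) *
      (starRingEnd ℂ) (dBlock N P j g (latPt N z)) = 0 := by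
  simp only [dBlock_eq, mul_assoc, map_mul, map_sum, Complex.conj_ofReal]
  have h : ∀ z : Lat N, ((N:ℂ)^2)⁻¹ * ((1/4 : ℂ) * ((∑ w : Lat N,
      (((LPchi P k ((latRep N w.1 : ℝ), (latRep N w.2 : ℝ)) : ℝ) : ℂ) *
      (dFT N f (latRep2 N w) * chE N w z))) * ((starRingEnd ℂ) (1/4) * ∑ v : Lat N,
      (((LPchi P j ((latRep N v.1 : ℝ), (latRep N v.2 : ℝ)) : ℝ) : ℂ) *
      ((starRingEnd ℂ) (dFT N g (latRep2 N v)) * (starRingEnd ℂ) (chE N v z)))))) =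
      ∑ w : Lat N, ∑ v : Lat N, (((N:ℂ)^2)⁻¹ * (1/4) * (starRingEnd ℂ) (1/4) *
        ((LPchi P k ((latRep N w.1 : ℝ), (latRep N w.2 : ℝ)) : ℝ) : ℂ) *
        ((LPchi P j ((latRep N v.1 : ℝ), (latRep N v.2 : ℝ)) : ℝ) : ℂ) *
        dFT N f (latRep2 N w) * (starRingEnd ℂ) (dFT N g (latRep2 N v))) *
        (chE N z w * (starRingEnd ℂ) (chE N z v)) := by
    intro z
    simp only [Finset.mul_sum, Finset.sum_mul]
    rw [Finset.sum_comm]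
    refine Finset.sum_congr rfl fun w _ => Finset.sum_congr rfl fun v _ => ?_
    rw [chE_comm N z w, chE_comm N z v]
    ring
  rw [Finset.sum_congr rfl fun z _ => h z, Finset.sum_comm]
  refine Finset.sum_eq_zero fun w _ => ?_
  rw [Finset.sum_comm]
  refine Finset.sum_eq_zero fun v _ => ?_
  rw [← Finset.mul_sum, chE_orth]
  split_ifs with hw
  · subst hw
    have h0 := hkj ((latRep N w.1 : ℝ), (latRep N w.2 : ℝ))
    rcases mul_eq_zero.1 h0 with h0 | h0 <;> rw [h0] <;> simp
  · simp

theorem decomp (N : ℕ) [NeZero N] (P : LPpartition) (K : ℕ)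
    (hK : ∀ w : Lat N, ∑ n ∈ Finset.range K,
      LPchi P ((n:ℤ) - 1) ((latRep N w.1 : ℝ), (latRep N w.2 : ℝ)) = 1)
    (f : Lat N → ℂ) (z : Lat N) :
    ∑ n ∈ Finset.range K, dBlock N P ((n:ℤ) - 1) f (latPt N z) = f z := by
  simp only [dBlock_eq]
  rw [← Finset.mul_sum, Finset.sum_comm, ← inversion N f z]
  congr 1
  refine Finset.sum_congr rfl fun w _ => ?_
  rw [← Finset.sum_mul, ← Finset.sum_mul, ← Complex.ofReal_sum, hK w]
  simp

theorem dLp_zero (N : ℕ) [NeZero N] (p : ℝ≥0∞) (hp : 1 ≤ p) (f : Lat N → ℂ) (hf : ∀ z, f z = 0) :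
    dLp N p f = 0 := by
  unfold dLp
  split_ifs with h
  · simp [hf]
  · have hq0 : p.toReal ≠ 0 := by
      have : 0 < p.toReal := ENNReal.toReal_pos (by rintro rfl; simp at hp) h
      exact this.ne'
    simp [hf, Real.zero_rpow hq0, Real.zero_rpow (inv_ne_zero hq0)]

/-- duality for discrete Besov spaces:
`⟨f,g⟩_{Λ_ε} ≤ C ‖f‖_{B^α_{p,q}(Λ_ε)} ‖g‖_{B^{-α}_{p',q'}(Λ_ε)}`. -/
theorem statement9 (P : LPpartition) (α : ℝ) (p q p' q' : ℝ≥0∞)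
    (hp : 1 ≤ p) (hq : 1 ≤ q) (hp' : 1 ≤ p') (hq' : 1 ≤ q')
    (hpc : 1/p + 1/p' = 1) (hqc : 1/q + 1/q' = 1) :
    ∃ C : ℝ, 0 < C ∧ ∀ (N : ℕ) [NeZero N], ∀ f g : Lat N → ℝ,
      (∑ x : Lat N, ((N : ℝ)^2)⁻¹ * f x * g x) ≤
        C * dBesov N P α p q (fun z => ((f z : ℝ) : ℂ)) *
          dBesov N P (-α) p' q' (fun z => ((g z : ℝ) : ℂ)) := by
  refine ⟨3 * 2^|α|, by positivity, ?_⟩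
  intro N _ f g
  obtain ⟨K, hK0, hK1⟩ := exists_K P
    (fun w : Lat N => (((latRep N w.1 : ℝ), (latRep N w.2 : ℝ)) : ℝ × ℝ))
  set F : Lat N → ℂ := fun z => ((f z : ℝ) : ℂ) with hF
  set G : Lat N → ℂ := fun z => ((g z : ℝ) : ℂ) with hG
  set x : ℕ → ℝ := fun k => dLp N p (fun z => dBlock N P ((k:ℤ)-1) F (latPt N z)) with hx
  set y : ℕ → ℝ := fun k => dLp N p' (fun z => dBlock N P ((k:ℤ)-1) G (latPt N z)) with hy
  set a : ℕ → ℝ := fun k => (2:ℝ)^(α * ((k:ℝ) - 1)) * x k with ha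
  set b : ℕ → ℝ := fun k => (2:ℝ)^(-α * ((k:ℝ) - 1)) * y k with hb
  have hBF : dBesov N P α p q F = lq q a := rfl
  have hBG : dBesov N P (-α) p' q' G = lq q' b := rfl
  rw [hBF, hBG]
  have hx0 : ∀ k, 0 ≤ x k := fun k => dLp_nonneg _ _ _
  have hy0 : ∀ k, 0 ≤ y k := fun k => dLp_nonneg _ _ _
  have ha0 : ∀ k, 0 ≤ a k := fun k => mul_nonneg (by positivity) (hx0 k)
  have hb0 : ∀ k, 0 ≤ b k := fun k => mul_nonneg (by positivity) (hy0 k)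
  have hblock : ∀ (H : Lat N → ℂ) (n : ℕ), K ≤ n → ∀ z,
      dBlock N P ((n:ℤ)-1) H (latPt N z) = 0 := by
    intro H n hn z
    rw [dBlock_eq]
    simp only [hK0 _ n hn]
    simp
  have haK : ∀ n, K ≤ n → a n = 0 := fun n hn => by
    simp only [ha, hx]
    rw [dLp_zero N p hp _ (hblock F n hn), mul_zero]
  have hbK : ∀ n, K ≤ n → b n = 0 := fun n hn => by
    simp only [hb, hy]
    rw [dLp_zero N p' hp' _ (hblock G n hn), mul_zero]
  set I : ℕ → ℕ → ℂ := fun n m => ∑ z : Lat N, ((N:ℂ)^2)⁻¹ * dBlock N P ((n:ℤ)-1) F (latPt N z) *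
      (starRingEnd ℂ) (dBlock N P ((m:ℤ)-1) G (latPt N z)) with hI
  have hIle : ∀ n m, ‖I n m‖ ≤ x n * y m := fun n m => dLp_holder N p p' hpc _ _
  have hsum : (((∑ z : Lat N, ((N : ℝ)^2)⁻¹ * f z * g z : ℝ)) : ℂ) =
      ∑ n ∈ Finset.range K, ∑ m ∈ Finset.range K, I n m := by
    simp only [hI]
    push_cast
    rw [Finset.sum_congr rfl fun n _ => Finset.sum_comm, Finset.sum_comm]
    refine Finset.sum_congr rfl fun z _ => ?_
    have h1 := decomp N P K hK1 F z
    have h2 := congrArg (starRingEnd ℂ) (decomp N P K hK1 G z)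
    rw [map_sum] at h2
    simp only [← Finset.mul_sum, h2, ← Finset.sum_mul, h1]
    simp [hF, hG]
  have hle1 : (∑ z : Lat N, ((N : ℝ)^2)⁻¹ * f z * g z) ≤
      ∑ n ∈ Finset.range K, ∑ m ∈ Finset.range K, ‖I n m‖ := by
    refine (le_abs_self _).trans ?_
    rw [← Real.norm_eq_abs, ← Complex.norm_real, hsum]
    exact (norm_sum_le _ _).trans (Finset.sum_le_sum fun n _ => norm_sum_le _ _)
  have hle2 := near_diag (fun n m => ‖I n m‖) (fun _ _ => norm_nonneg _)
    (fun n m h => by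
      simp only [hI]
      rw [block_orth N P _ _ (fun r => chi_disj P n m h r), norm_zero])
    (fun n m h => by
      simp only [hI]
      rw [block_orth N P _ _ (fun r => by rw [mul_comm]; exact chi_disj P m n h r), norm_zero]) K
  have hab : ∀ n m : ℕ, |(m:ℝ) - n| ≤ 1 → ‖I n m‖ ≤ 2^|α| * (a n * b m) := by
    intro n m hnm
    refine (hIle n m).trans ?_
    have e : a n * b m = (2:ℝ)^(α * ((n:ℝ) - m)) * (x n * y m) := by
      have : α * ((n:ℝ) - m) = α * ((n:ℝ) - 1) + -α * ((m:ℝ) - 1) := by ring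
      rw [this, Real.rpow_add (by norm_num)]
      simp only [ha, hb]; ring
    rw [e, ← mul_assoc, ← Real.rpow_add (by norm_num)]
    refine le_mul_of_one_le_left (mul_nonneg (hx0 _) (hy0 _)) ?_
    refine Real.one_le_rpow (by norm_num) ?_
    have h1 : |α * ((m:ℝ) - n)| ≤ |α| := by
      rw [abs_mul]; exact mul_le_of_le_one_right (abs_nonneg _) hnm
    have := (le_abs_self _).trans h1
    linarith
  have hh := fun σ τ hσ hτ => lq_holder q q' hq hq' hqc a b ha0 hb0 K haK hbK (Finset.range K)
    σ τ hσ hτ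
  have hs : ∀ σ τ : ℕ → ℕ, σ.Injective → τ.Injective → (∀ n, |(τ n:ℝ) - σ n| ≤ 1) →
      ∑ n ∈ Finset.range K, ‖I (σ n) (τ n)‖ ≤ 2^|α| * (lq q a * lq q' b) := by
    intro σ τ hσ hτ h
    refine (Finset.sum_le_sum fun n _ => hab _ _ (h n)).trans ?_
    rw [← Finset.mul_sum]
    exact mul_le_mul_of_nonneg_left (hh σ τ hσ hτ) (by positivity)
  have s1 := hs (fun n => n) (fun n => n) (fun _ _ h => h) (fun _ _ h => h) (by simp)
  have s2 := hs (fun n => n) (fun n => n+1) (fun _ _ h => h) (fun _ _ h => by simpa using h)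
    (by simp)
  have s3 := hs (fun n => n+1) (fun n => n) (fun _ _ h => by simpa using h) (fun _ _ h => h)
    (by simp)
  calc _ ≤ _ := hle1
    _ ≤ _ := hle2
    _ ≤ 2^|α| * (lq q a * lq q' b) + 2^|α| * (lq q a * lq q' b) + 2^|α| * (lq q a * lq q' b) :=
      add_le_add (add_le_add s1 s2) s3
    _ = _ := by ring

end IsingKac
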